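/- Let g : ℝ → ℝ be twice continuously differentiable such that g, g' and g'' have at most polynomial growth. If ∫ g'(x) g'(−x) dγ(x) < 0, then there exists ρ ∈ (−1,1] with φ_g(ρ) < φ_g(−1); in particular the minimum of φ_g over [−1,1] is not attained at ρ = −1. -/

import Mathlib

open MeasureTheory ProbabilityTheory

/-- `h` has at most polynomial growth. -/
def PolyGrowth (h : ℝ → ℝ) : Prop :=
  ∃ C > (0 : ℝ), ∃ m : ℕ, ∀ x : ℝ, |h x| ≤ C * (1 + |x|) ^ m

/-- The correlation functional `φ_g`. -/
noncomputable def phiCorr (g : ℝ → ℝ) (ρ : ℝ) : ℝ :=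
  ∫ x, ∫ y, g x * g (ρ * x + Real.sqrt (1 - ρ ^ 2) * y)
    ∂(gaussianReal 0 1) ∂(gaussianReal 0 1)

open Filter Topology

/-- `f` is bounded by a power of the weight `w`. -/
def PB {ι : Type} (w f : ι → ℝ) : Prop :=
  ∃ C : ℝ, 0 ≤ C ∧ ∃ m : ℕ, ∀ i, |f i| ≤ C * (w i) ^ m

lemma PB.mul {ι : Type} {w f g : ι → ℝ} (hw : ∀ i, 1 ≤ w i) (hf : PB w f) (hg : PB w g) :
    PB w (fun i => f i * g i) := by
  obtain ⟨C, hC, m, h⟩ := hf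
  obtain ⟨D, hD, n, k⟩ := hg
  refine ⟨C * D, by positivity, m + n, fun i => ?_⟩
  have := hw i
  calc |f i * g i| = |f i| * |g i| := abs_mul _ _
    _ ≤ (C * w i ^ m) * (D * w i ^ n) :=
        mul_le_mul (h i) (k i) (abs_nonneg _) (by positivity)
    _ = _ := by ring

lemma PB.sub {ι : Type} {w f g : ι → ℝ} (hw : ∀ i, 1 ≤ w i) (hf : PB w f) (hg : PB w g) :
    PB w (fun i => f i - g i) := by
  obtain ⟨C, hC, m, h⟩ := hf
  obtain ⟨D, hD, n, k⟩ := hg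
  refine ⟨C + D, by positivity, m + n, fun i => ?_⟩
  have hi := hw i
  have h1 : w i ^ m ≤ w i ^ (m + n) := pow_le_pow_right₀ hi (by omega)
  have h2 : w i ^ n ≤ w i ^ (m + n) := pow_le_pow_right₀ hi (by omega)
  calc |f i - g i| ≤ |f i| + |g i| := abs_sub _ _
    _ ≤ C * w i ^ m + D * w i ^ n := add_le_add (h i) (k i)
    _ ≤ C * w i ^ (m + n) + D * w i ^ (m + n) := by gcongr
    _ = _ := by ring

lemma PB.of_le {ι : Type} {w f : ι → ℝ} (h : ∀ i, |f i| ≤ w i) : PB w f :=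
  ⟨1, zero_le_one, 1, fun i => by simpa using h i⟩

lemma PB.comp {ι : Type} {w z : ι → ℝ} {f : ℝ → ℝ} (hf : PolyGrowth f)
    (hz : ∀ i, 1 + |z i| ≤ w i) : PB w (fun i => f (z i)) := by
  obtain ⟨C, hC, m, h⟩ := hf
  refine ⟨C, hC.le, m, fun i => (h _).trans ?_⟩
  have := hz i
  gcongr

lemma integrable_weight (m : ℕ) :
    Integrable (fun x : ℝ => (1 + |x|) ^ m) (gaussianReal 0 1) := by
  have h : MemLp (fun x : ℝ => 1 + |x|) m (gaussianReal 0 1) :=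
by
    have h1 : MemLp (fun _ : ℝ => (1 : ℝ)) m (gaussianReal 0 1) := memLp_const 1
    have h2 : MemLp (fun x : ℝ => |x|) m (gaussianReal 0 1) :=
      (memLp_id_gaussianReal' (μ := 0) (v := 1) (m : ENNReal) (by simp)).norm
    exact h1.add h2
  have := h.integrable_norm_pow'
  refine this.congr (ae_of_all _ fun x => ?_)
  simp only [Real.norm_eq_abs]
  rw [abs_of_nonneg (by positivity)]

lemma integrable_of_PB {f : ℝ → ℝ} (hc : Continuous f) (hf : PB (fun x : ℝ => 1 + |x|) f) :
    Integrable f (gaussianReal 0 1) := by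
  obtain ⟨C, hC, m, h⟩ := hf
  exact ((integrable_weight m).const_mul C).mono' hc.aestronglyMeasurable
    (ae_of_all _ fun x => h x)

lemma integrable_pdf {f : ℝ → ℝ} (hf : Integrable f (gaussianReal 0 1)) :
    Integrable (fun x => f x * gaussianPDFReal 0 1 x) := by
  rw [gaussianReal_of_var_ne_zero 0 one_ne_zero,
    integrable_withDensity_iff_integrable_smul' (measurable_gaussianPDF 0 1)
      (ae_of_all _ fun _ => gaussianPDF_lt_top)] at hf
  refine hf.congr (ae_of_all _ fun x => ?_)
  simp [toReal_gaussianPDF, mul_comm]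

lemma hasDerivAt_pdf (x : ℝ) :
    HasDerivAt (gaussianPDFReal 0 1) (-x * gaussianPDFReal 0 1 x) x := by
  rw [gaussianPDFReal_def]
  have h : HasDerivAt (fun x : ℝ => -(x - 0) ^ 2 / (2 * ((1 : NNReal) : ℝ))) (-x) x := by
    have := ((((hasDerivAt_id x).sub_const 0).pow 2).neg).div_const (2 * ((1 : NNReal) : ℝ))
    exact this.congr_deriv (by simp; ring)
  exact ((h.exp).const_mul ((√(2 * Real.pi * ((1 : NNReal) : ℝ)))⁻¹)).congr_deriv (by ring)

lemma stein {h h' : ℝ → ℝ} (hd : ∀ x, HasDerivAt h (h' x) x)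
    (i0 : Integrable h (gaussianReal 0 1)) (i1 : Integrable h' (gaussianReal 0 1))
    (i2 : Integrable (fun x => h x * x) (gaussianReal 0 1)) :
    ∫ x, h x * x ∂(gaussianReal 0 1) = ∫ x, h' x ∂(gaussianReal 0 1) := by
  have key := integral_mul_deriv_eq_deriv_mul_of_integrable (u := h) (u' := h')
    (v := gaussianPDFReal 0 1) (v' := fun x => -x * gaussianPDFReal 0 1 x)
    (fun x _ => hd x) (fun x _ => hasDerivAt_pdf x)
    ((integrable_pdf i2).neg.congr (ae_of_all _ fun x => by simp; ring))
    (integrable_pdf i1) (integrable_pdf i0)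
  rw [integral_gaussianReal_eq_integral_smul one_ne_zero,
    integral_gaussianReal_eq_integral_smul one_ne_zero]
  have e1 : ∫ x, gaussianPDFReal 0 1 x • (h x * x)
      = - ∫ x, h x * (-x * gaussianPDFReal 0 1 x) := by
    rw [← integral_neg]; congr 1; ext x; simp; ring
  have e2 : ∫ x, gaussianPDFReal 0 1 x • h' x = ∫ x, h' x * gaussianPDFReal 0 1 x := by
    congr 1; ext x; simp; ring
  rw [e1, e2, key, neg_neg]

/-- Weight on triples (angle, x, y). -/
noncomputable def W2 (p : ℝ × ℝ × ℝ) : ℝ := (1 + |p.2.1|) * (1 + |p.2.2|)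

lemma W2_ge (p : ℝ × ℝ × ℝ) : 1 + |p.2.1| + |p.2.2| ≤ W2 p := by
  unfold W2; nlinarith [mul_nonneg (abs_nonneg p.2.1) (abs_nonneg p.2.2)]

lemma W2_one (p : ℝ × ℝ × ℝ) : 1 ≤ W2 p := by
  linarith [W2_ge p, abs_nonneg p.2.1, abs_nonneg p.2.2]

lemma dom {f : ℝ × ℝ × ℝ → ℝ} (hf : PB W2 f) :
    ∃ b : ℝ × ℝ → ℝ, Integrable b ((gaussianReal 0 1).prod (gaussianReal 0 1)) ∧
      ∀ t p, ‖f (t, p)‖ ≤ b p := by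
  obtain ⟨C, hC, m, h⟩ := hf
  refine ⟨fun p => C * ((1 + |p.1|) ^ m * (1 + |p.2|) ^ m),
    ((integrable_weight m).mul_prod (integrable_weight m)).const_mul C, fun t p => ?_⟩
  have := h (t, p)
  simp only [W2, mul_pow] at this
  exact this

lemma integrable_of_PB2 {f : ℝ × ℝ × ℝ → ℝ} (hc : Continuous f) (hf : PB W2 f) (t : ℝ) :
    Integrable (fun p => f (t, p)) ((gaussianReal 0 1).prod (gaussianReal 0 1)) := by
  obtain ⟨b, hb, h⟩ := dom hf
  exact hb.mono' (by fun_prop : Continuous fun p => f (t, p)).aestronglyMeasurable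
    (ae_of_all _ fun p => h t p)

lemma diff_integral {f f' : ℝ × ℝ × ℝ → ℝ} (hc : Continuous f) (hc' : Continuous f')
    (hf : PB W2 f) (hf' : PB W2 f')
    (hd : ∀ p t, HasDerivAt (fun s => f (s, p)) (f' (t, p)) t) (t : ℝ) :
    HasDerivAt (fun s => ∫ p, f (s, p) ∂((gaussianReal 0 1).prod (gaussianReal 0 1)))
      (∫ p, f' (t, p) ∂((gaussianReal 0 1).prod (gaussianReal 0 1))) t := by
  obtain ⟨b, hb, h⟩ := dom hf'
  exact (hasDerivAt_integral_of_dominated_loc_of_deriv_le (F := fun s p => f (s, p))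
    (F' := fun s p => f' (s, p)) (s := Set.univ) univ_mem
    (Eventually.of_forall fun s => (integrable_of_PB2 hc hf s).aestronglyMeasurable)
    (integrable_of_PB2 hc hf t) (integrable_of_PB2 hc' hf' t).aestronglyMeasurable
    (ae_of_all _ fun p s _ => h s p) hb (ae_of_all _ fun p s _ => hd p s)).2

lemma second_test {F F' : ℝ → ℝ} {c : ℝ} (h1 : ∀ t, HasDerivAt F (F' t) t)
    (h2 : HasDerivAt F' c 0) (h0 : F' 0 = 0) (hc : c < 0) :
    ∃ t ∈ Set.Ioo 0 Real.pi, F t < F 0 := by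
  have ht := h2.tendsto_slope_zero_right
  have hev := ht.eventually (gt_mem_nhds hc)
  obtain ⟨d, hd, hsub⟩ := mem_nhdsGT_iff_exists_Ioo_subset.1 hev
  have hd : 0 < d := hd
  have hneg : ∀ t ∈ Set.Ioo 0 d, F' t < 0 := by
    intro t ht
    have := hsub ht
    simp only [Set.mem_ofPred_eq, zero_add, h0, sub_zero, smul_eq_mul] at this
    by_contra hcon
    push Not at hcon
    have : 0 ≤ t⁻¹ * F' t := mul_nonneg (inv_nonneg.2 ht.1.le) hcon
    linarith
  set e := min d Real.pi / 2
  have hm : 0 < min d Real.pi := lt_min hd Real.pi_pos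
  have he : 0 < e := by positivity
  have hed : e < d := by have := min_le_left d Real.pi; simp only [e]; linarith
  have hep : e < Real.pi := by have := min_le_right d Real.pi; simp only [e]; linarith
  refine ⟨e, ⟨he, hep⟩, ?_⟩
  have hanti : StrictAntiOn F (Set.Icc 0 e) := by
    refine strictAntiOn_of_deriv_neg (convex_Icc _ _)
      (fun x _ => (h1 x).continuousAt.continuousWithinAt) fun x hx => ?_
    rw [interior_Icc] at hx
    rw [(h1 x).deriv]
    exact hneg x ⟨hx.1, hx.2.trans hed⟩
  exact hanti ⟨le_rfl, he.le⟩ ⟨he.le, le_rfl⟩ he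

/-- The rotated point. -/
noncomputable def Z (p : ℝ × ℝ × ℝ) : ℝ := -Real.cos p.1 * p.2.1 + Real.sin p.1 * p.2.2
/-- Derivative of the rotated point. -/
noncomputable def Z' (p : ℝ × ℝ × ℝ) : ℝ := Real.sin p.1 * p.2.1 + Real.cos p.1 * p.2.2

lemma rot_bound (a b x y : ℝ) (ha : |a| ≤ 1) (hb : |b| ≤ 1) :
    |a * x + b * y| ≤ |x| + |y| := by
  calc |a * x + b * y| ≤ |a * x| + |b * y| := abs_add_le _ _
    _ = |a| * |x| + |b| * |y| := by rw [abs_mul, abs_mul]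
    _ ≤ 1 * |x| + 1 * |y| := by gcongr
    _ = _ := by ring

lemma Z_bound (p : ℝ × ℝ × ℝ) : 1 + |Z p| ≤ W2 p := by
  have := rot_bound (-Real.cos p.1) (Real.sin p.1) p.2.1 p.2.2
    (by rw [abs_neg]; exact Real.abs_cos_le_one _) (Real.abs_sin_le_one _)
  have h := W2_ge p
  unfold Z; linarith

lemma Z'_bound (p : ℝ × ℝ × ℝ) : |Z' p| ≤ W2 p := by
  have := rot_bound (Real.sin p.1) (Real.cos p.1) p.2.1 p.2.2
    (Real.abs_sin_le_one _) (Real.abs_cos_le_one _)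
  have h := W2_ge p
  unfold Z'; linarith

lemma continuous_Z : Continuous Z := by unfold Z; fun_prop
lemma continuous_Z' : Continuous Z' := by unfold Z'; fun_prop

lemma hasDerivAt_Z (p : ℝ × ℝ) (t : ℝ) : HasDerivAt (fun s => Z (s, p)) (Z' (t, p)) t := by
  unfold Z Z'
  have := ((Real.hasDerivAt_cos t).neg.mul_const p.1).add ((Real.hasDerivAt_sin t).mul_const p.2)
  exact this.congr_deriv (by ring)

lemma hasDerivAt_Z' (p : ℝ × ℝ) (t : ℝ) : HasDerivAt (fun s => Z' (s, p)) (-Z (t, p)) t := by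
  unfold Z Z'
  have := ((Real.hasDerivAt_sin t).mul_const p.1).add ((Real.hasDerivAt_cos t).mul_const p.2)
  exact this.congr_deriv (by ring)

lemma integral_sq_gauss : ∫ y, y * y ∂(gaussianReal 0 1) = (1 : ℝ) := by
  have w1 : ∀ x : ℝ, 1 ≤ 1 + |x| := fun x => by linarith [abs_nonneg x]
  have hx : PB (fun x : ℝ => 1 + |x|) (fun x => x) := PB.of_le fun x => by linarith
  have := stein (h := fun x => x) (h' := fun _ => 1) (fun x => hasDerivAt_id x)
    (integrable_of_PB continuous_id hx) (integrable_const _)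
    (integrable_of_PB (by fun_prop) (hx.mul w1 hx))
  rw [this]; simp

theorem antithetic_not_optimal (g : ℝ → ℝ) (hg : ContDiff ℝ 2 g)
    (h0 : PolyGrowth g) (h1 : PolyGrowth (deriv g)) (h2 : PolyGrowth (deriv (deriv g)))
    (hneg : ∫ x, deriv g x * deriv g (-x) ∂(gaussianReal 0 1) < 0) :
    ∃ ρ ∈ Set.Ioc (-1 : ℝ) 1, phiCorr g ρ < phiCorr g (-1) := by
  have hg1 : ContDiff ℝ 1 (deriv g) :=
    (contDiff_succ_iff_deriv.1 (by simpa [one_add_one_eq_two] using hg :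
      ContDiff ℝ (1 + 1) g)).2.2
  have c0 : Continuous g := hg.continuous
  have c1 : Continuous (deriv g) := hg1.continuous
  have c2 : Continuous (deriv (deriv g)) := hg1.continuous_deriv le_rfl
  have d0 : ∀ x, HasDerivAt g (deriv g x) x := fun x =>
    (hg.differentiable (by norm_num) x).hasDerivAt
  have d1 : ∀ x, HasDerivAt (deriv g) (deriv (deriv g) x) x := fun x =>
    (hg1.differentiable (by norm_num) x).hasDerivAt
  have cZ := continuous_Z
  have cZ' := continuous_Z'
  have bg : PB W2 (fun p => g p.2.1) := PB.comp h0 fun p => by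
    linarith [W2_ge p, abs_nonneg p.2.2]
  have b0 : PB W2 (fun p => g (Z p)) := PB.comp h0 Z_bound
  have b1 : PB W2 (fun p => deriv g (Z p)) := PB.comp h1 Z_bound
  have b2 : PB W2 (fun p => deriv (deriv g) (Z p)) := PB.comp h2 Z_bound
  have bZ : PB W2 Z := PB.of_le fun p => by linarith [Z_bound p]
  have bZ' : PB W2 Z' := PB.of_le Z'_bound
  have w := W2_one
  let H0 : ℝ × ℝ × ℝ → ℝ := fun p => g p.2.1 * g (Z p)
  let H1 : ℝ × ℝ × ℝ → ℝ := fun p => g p.2.1 * (deriv g (Z p) * Z' p)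
  let H2 : ℝ × ℝ × ℝ → ℝ := fun p => g p.2.1 *
    (deriv (deriv g) (Z p) * Z' p * Z' p - deriv g (Z p) * Z p)
  have P0 : PB W2 H0 := bg.mul w b0
  have P1 : PB W2 H1 := bg.mul w (b1.mul w bZ')
  have P2 : PB W2 H2 := bg.mul w (((b2.mul w bZ').mul w bZ').sub w (b1.mul w bZ))
  have C0 : Continuous H0 := by fun_prop
  have C1 : Continuous H1 := by fun_prop
  have C2 : Continuous H2 := by fun_prop
  have D0 : ∀ p t, HasDerivAt (fun s => H0 (s, p)) (H1 (t, p)) t := fun p t =>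
    ((d0 _).comp t (hasDerivAt_Z p t)).const_mul (g p.1)
  have D1 : ∀ p t, HasDerivAt (fun s => H1 (s, p)) (H2 (t, p)) t := fun p t => by
    have := (((d1 _).comp t (hasDerivAt_Z p t)).mul (hasDerivAt_Z' p t)).const_mul (g p.1)
    exact this.congr_deriv (by simp only [H2, Function.comp]; ring)
  have E0 := diff_integral C0 C1 P0 P1 D0
  have E1 := diff_integral C1 C2 P1 P2 D1
  have w1 : ∀ x : ℝ, 1 ≤ 1 + |x| := fun x => by linarith [abs_nonneg x]
  have q : PB (fun x : ℝ => 1 + |x|) (fun x => x) := PB.of_le fun x => by linarith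
  have q0 : PB (fun x : ℝ => 1 + |x|) (fun x => g x) := PB.comp h0 fun x => le_rfl
  have q0' : PB (fun x : ℝ => 1 + |x|) (fun x => deriv g x) := PB.comp h1 fun x => le_rfl
  have q1 : PB (fun x : ℝ => 1 + |x|) (fun x => deriv g (-x)) := PB.comp h1 fun x => by simp
  have q2 : PB (fun x : ℝ => 1 + |x|) (fun x => deriv (deriv g) (-x)) :=
    PB.comp h2 fun x => by simp
  have iA : Integrable (fun x => deriv g x * deriv g (-x)) (gaussianReal 0 1) :=
    integrable_of_PB (by fun_prop) (q0'.mul w1 q1)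
  have iB : Integrable (fun x => g x * deriv (deriv g) (-x)) (gaussianReal 0 1) :=
    integrable_of_PB (by fun_prop) (q0.mul w1 q2)
  have iC : Integrable (fun x => g x * deriv g (-x)) (gaussianReal 0 1) :=
    integrable_of_PB (by fun_prop) (q0.mul w1 q1)
  have iD : Integrable (fun x => g x * deriv g (-x) * x) (gaussianReal 0 1) :=
    integrable_of_PB (by fun_prop) ((q0.mul w1 q1).mul w1 q)
  have iY : Integrable (fun y : ℝ => y * y) (gaussianReal 0 1) :=
    integrable_of_PB (by fun_prop) (q.mul w1 q)
  have st := stein (h := fun x => g x * deriv g (-x))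
    (h' := fun x => deriv g x * deriv g (-x) - g x * deriv (deriv g) (-x))
    (fun x => by
      have := (d0 x).mul ((d1 (-x)).comp x (hasDerivAt_neg x))
      exact this.congr_deriv (by simp only [Function.comp]; ring)) iC (iA.sub iB) iD
  rw [integral_sub iA iB] at st
  have V1 : ∫ p, H1 (0, p) ∂((gaussianReal 0 1).prod (gaussianReal 0 1)) = 0 := by
    have : (fun p : ℝ × ℝ => H1 (0, p)) = fun p => (g p.1 * deriv g (-p.1)) * p.2 := by
      ext p; simp [H1, Z, Z']; ring
    rw [this, integral_prod_mul (fun x => g x * deriv g (-x)) (fun y => y)]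
    simp
  have V2 : ∫ p, H2 (0, p) ∂((gaussianReal 0 1).prod (gaussianReal 0 1))
      = ∫ x, deriv g x * deriv g (-x) ∂(gaussianReal 0 1) := by
    have : (fun p : ℝ × ℝ => H2 (0, p)) = fun p =>
        (g p.1 * deriv (deriv g) (-p.1)) * (p.2 * p.2)
          + (g p.1 * deriv g (-p.1) * p.1) * 1 := by
      ext p; simp [H2, Z, Z']; ring
    rw [this, integral_add (iB.mul_prod iY) (iD.mul_prod (integrable_const 1)),
      integral_prod_mul (fun x => g x * deriv (deriv g) (-x)) (fun y => y * y),
      integral_prod_mul (fun x => g x * deriv g (-x) * x) (fun _ => (1 : ℝ)),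
      integral_sq_gauss, st]
    simp
  obtain ⟨t, ⟨ht0, htp⟩, hlt⟩ := second_test E0 (E1 0) V1 (by rw [V2]; exact hneg)
  have hphi : ∀ s, 0 ≤ s → s ≤ Real.pi → phiCorr g (-Real.cos s) =
      ∫ p, H0 (s, p) ∂((gaussianReal 0 1).prod (gaussianReal 0 1)) := by
    intro s hs0 hsp
    rw [integral_prod _ (integrable_of_PB2 C0 P0 s)]
    have : Real.sqrt (1 - (-Real.cos s) ^ 2) = Real.sin s := by
      rw [neg_sq, ← Real.sin_sq, Real.sqrt_sq (Real.sin_nonneg_of_nonneg_of_le_pi hs0 hsp)]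
    simp only [phiCorr, this, H0, Z]
  have e0 := hphi 0 le_rfl Real.pi_pos.le
  rw [Real.cos_zero] at e0
  refine ⟨-Real.cos t, ⟨?_, ?_⟩, ?_⟩
  · have := Real.cos_lt_cos_of_nonneg_of_le_pi le_rfl htp.le ht0
    rw [Real.cos_zero] at this
    linarith
  · linarith [Real.neg_one_le_cos t]
  · rw [hphi t ht0.le htp.le, e0]
    exact hlt
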